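/- Let r and n be integers with 2 ≤ r and n ≥ r+1, and let G be a K_{r+1}-saturated simple graph on n vertices with m edges. Then ∑_{v ∈ V(G)} d(v)² ≥ (r-1)·n·(n-r) + (r-1)·n + 2(r-2)·m, where d(v) denotes the degree of v. -/

import Mathlib

open SimpleGraph

/-- A graph `G` is `K_r`-saturated if it contains no `r`-clique, but adding any edge
between distinct non-adjacent vertices creates an `r`-clique. -/
def IsKSaturated {V : Type*} (r : ℕ) (G : SimpleGraph V) : Prop :=
  G.CliqueFree r ∧ ∀ u v : V, u ≠ v → ¬ G.Adj u v →
    ¬ (G ⊔ SimpleGraph.fromEdgeSet {s(u, v)}).CliqueFree r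

/-!
Let `s = r - 1`. By saturation, each non-edge `e` has an `s`-clique `T e` in the common
neighbourhood of its ends. Fix a vertex `v`. For every non-edge `e` with `v ∈ T e`, the
set `e ∪ (T e \ {v})` consists of `s + 1` neighbours of `v` and contains no non-edge other
than `e`. Bollobás's two families theorem, applied to these non-edges and to the
complements of these sets in the neighbourhood of `v`, bounds the number of such `e` by
the binomial coefficient `(d(v) + 1 - s).choose 2`. Summing over `v` counts every non-edge
`s` times, so `s` times the number of non-edges is at most the sum of these coefficients,
a quadratic expression in the degrees.
-/

section TwoFamilies

open Finset

variable {ι α : Type*}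

lemma succ_mul_inv_choose_add (a b : ℕ) :
    ((b + 1 : ℕ) : ℚ) * ((a + b).choose a : ℚ)⁻¹ =
      ((a + (b + 1) : ℕ) : ℚ) * ((a + (b + 1)).choose a : ℚ)⁻¹ := by
  have hchoose : (b + 1) * (a + (b + 1)).choose a = (a + (b + 1)) * (a + b).choose a := by
    rw [mul_comm, mul_comm (a + (b + 1)), ← add_assoc, Nat.choose_mul_succ_eq, add_assoc,
      Nat.add_sub_cancel_left]
  have hpos : ((a + b).choose a : ℚ) ≠ 0 :=
    Nat.cast_ne_zero.mpr (Nat.choose_pos (Nat.le_add_right a b)).ne'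
  have hpos' : ((a + (b + 1)).choose a : ℚ) ≠ 0 :=
    Nat.cast_ne_zero.mpr (Nat.choose_pos (Nat.le_add_right a (b + 1))).ne'
  rw [← div_eq_mul_inv, ← div_eq_mul_inv, div_eq_div_iff hpos hpos']
  exact_mod_cast hchoose

lemma sum_inv_choose_card_erase [DecidableEq α] {A B X : Finset α} (hA : A ⊆ X) (hB : B ⊆ X)
    (hAB : Disjoint A B) (hne : B.Nonempty) :
    ∑ x ∈ X \ A, ((#A + #(B.erase x)).choose #A : ℚ)⁻¹ = #X * ((#A + #B).choose #A : ℚ)⁻¹ := by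
  have hBXA : B ⊆ X \ A := subset_sdiff.mpr ⟨hB, hAB.symm⟩
  have hcard : #((X \ A) \ B) + (#A + #B) = #X := by
    rw [← card_sdiff_add_card_eq_card hA, ← card_sdiff_add_card_eq_card hBXA]
    ring
  obtain ⟨b, hb⟩ := Nat.exists_eq_add_one.mpr hne.card_pos
  have houtside : ∑ x ∈ (X \ A) \ B, ((#A + #(B.erase x)).choose #A : ℚ)⁻¹ =
      #((X \ A) \ B) * ((#A + #B).choose #A : ℚ)⁻¹ := by
    rw [← nsmul_eq_mul]
    exact sum_eq_card_nsmul fun x hx ↦ by rw [erase_eq_of_notMem (mem_sdiff.mp hx).2]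
  have hinside : ∑ x ∈ B, ((#A + #(B.erase x)).choose #A : ℚ)⁻¹ =
      ((#A + #B : ℕ) : ℚ) * ((#A + #B).choose #A : ℚ)⁻¹ := by
    rw [hb, ← succ_mul_inv_choose_add, ← hb, ← nsmul_eq_mul]
    exact sum_eq_card_nsmul fun x hx ↦ by rw [card_erase_of_mem hx, hb, Nat.add_sub_cancel]
  rw [← sum_sdiff hBXA, houtside, hinside, ← add_mul, ← Nat.cast_add, hcard]

lemma sum_sum_inv_choose_card_erase [DecidableEq α] {s : Finset ι} {A B : ι → Finset α}
    {X : Finset α} (hA : ∀ i ∈ s, A i ⊆ X) (hB : ∀ i ∈ s, B i ⊆ X)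
    (hAB : ∀ i ∈ s, Disjoint (A i) (B i)) (hne : ∀ i ∈ s, (B i).Nonempty) :
    ∑ x ∈ X, ∑ i ∈ s with x ∉ A i, ((#(A i) + #((B i).erase x)).choose #(A i) : ℚ)⁻¹ =
      #X * ∑ i ∈ s, ((#(A i) + #(B i)).choose #(A i) : ℚ)⁻¹ :=
  calc ∑ x ∈ X, ∑ i ∈ s with x ∉ A i, ((#(A i) + #((B i).erase x)).choose #(A i) : ℚ)⁻¹
      = ∑ i ∈ s, ∑ x ∈ X \ A i, ((#(A i) + #((B i).erase x)).choose #(A i) : ℚ)⁻¹ :=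
        sum_comm' fun x i ↦ by simp only [mem_sdiff, mem_filter]; tauto
    _ = #X * ∑ i ∈ s, ((#(A i) + #(B i)).choose #(A i) : ℚ)⁻¹ := by
        rw [mul_sum]
        exact sum_congr rfl fun i hi ↦
          sum_inv_choose_card_erase (hA i hi) (hB i hi) (hAB i hi) (hne i hi)

-- Averaging over the ground set `X`: deleting `x` from every `B i` and discarding the `i` with
-- `x ∈ A i` keeps the hypotheses, and summing the resulting inequalities over `x` gives `#X` times
-- the desired one.
theorem bollobas_sum_inv_choose_le_one {s : Finset ι} {A B : ι → Finset α}
    (hdisj : ∀ i ∈ s, Disjoint (A i) (B i))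
    (hcross : ∀ i ∈ s, ∀ j ∈ s, i ≠ j → ¬ Disjoint (A i) (B j)) :
    ∑ i ∈ s, ((#(A i) + #(B i)).choose #(A i) : ℚ)⁻¹ ≤ 1 := by
  classical
  obtain ⟨X, hAX, hBX⟩ : ∃ X, (∀ i ∈ s, A i ⊆ X) ∧ ∀ i ∈ s, B i ⊆ X :=
    ⟨s.biUnion A ∪ s.biUnion B,
      fun _ hi ↦ (subset_biUnion_of_mem A hi).trans subset_union_left,
      fun _ hi ↦ (subset_biUnion_of_mem B hi).trans subset_union_right⟩
  induction X using Finset.strongInduction generalizing s B with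
  | H X ih =>
    by_cases hempty : ∃ i ∈ s, B i = ∅
    · obtain ⟨i, hi, hBi⟩ := hempty
      have hs : s = {i} := eq_singleton_iff_unique_mem.mpr
        ⟨hi, fun j hj ↦ by_contra fun hji ↦ hcross j hj i hi hji (by simp [hBi])⟩
      simp [hs, hBi]
    have hne : ∀ i ∈ s, (B i).Nonempty := fun i hi ↦
      nonempty_iff_ne_empty.mpr fun hBi ↦ hempty ⟨i, hi, hBi⟩
    obtain rfl | ⟨i, hi⟩ := s.eq_empty_or_nonempty
    · simp
    have hX : 0 < (#X : ℚ) := Nat.cast_pos.mpr ((hne i hi).mono (hBX i hi)).card_pos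
    have hdelete : ∀ x ∈ X,
        ∑ i ∈ s with x ∉ A i, ((#(A i) + #((B i).erase x)).choose #(A i) : ℚ)⁻¹ ≤ 1 := by
      intro x hx
      refine ih (X.erase x) (erase_ssubset hx) (B := fun i ↦ (B i).erase x) ?_ ?_ ?_ ?_ <;>
        simp only [mem_filter, and_imp]
      · exact fun i hi _ ↦ (hdisj i hi).mono_right (erase_subset x (B i))
      · intro i hi hxi j hj _ hij
        rw [← disjoint_erase_comm, erase_eq_of_notMem hxi]
        exact hcross i hi j hj hij
      · exact fun i hi hxi ↦ subset_erase.mpr ⟨hAX i hi, hxi⟩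
      · exact fun i hi _ ↦ erase_subset_erase x (hBX i hi)
    refine le_of_mul_le_mul_left ?_ hX
    calc #X * ∑ i ∈ s, ((#(A i) + #(B i)).choose #(A i) : ℚ)⁻¹
        = ∑ x ∈ X, ∑ i ∈ s with x ∉ A i, ((#(A i) + #((B i).erase x)).choose #(A i) : ℚ)⁻¹ :=
          (sum_sum_inv_choose_card_erase hAX hBX hdisj hne).symm
      _ ≤ #X * 1 := by
          rw [← nsmul_eq_mul]
          exact sum_le_card_nsmul X _ 1 hdelete

lemma card_le_choose_of_forall_subset_imp_eq {s : Finset ι} {A W : ι → Finset α} {X : Finset α}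
    {a m : ℕ} (hA : ∀ i ∈ s, #(A i) = a) (hW : ∀ i ∈ s, #(W i) = m)
    (hAW : ∀ i ∈ s, A i ⊆ W i) (hWX : ∀ i ∈ s, W i ⊆ X)
    (huniq : ∀ i ∈ s, ∀ j ∈ s, A i ⊆ W j → i = j) :
    #s ≤ (#X + a - m).choose a := by
  classical
  have hterm : ∀ i ∈ s, ((#(A i) + #(X \ W i)).choose #(A i) : ℚ)⁻¹ =
      ((#X + a - m).choose a : ℚ)⁻¹ := by
    intro i hi
    have hmX : m ≤ #X := hW i hi ▸ card_le_card (hWX i hi)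
    rw [card_sdiff_of_subset (hWX i hi), hA i hi, hW i hi, ← Nat.add_sub_assoc hmX, add_comm]
  have hbollobas : (#s : ℚ) * ((#X + a - m).choose a : ℚ)⁻¹ ≤ 1 := by
    rw [← nsmul_eq_mul, ← sum_eq_card_nsmul hterm]
    refine bollobas_sum_inv_choose_le_one
      (fun i hi ↦ disjoint_sdiff.mono_left (hAW i hi)) fun i hi j hj hij hdisj ↦ hij ?_
    refine huniq i hi j hj fun x hx ↦ by_contra fun hxj ↦ ?_
    exact disjoint_left.mp hdisj hx (mem_sdiff.mpr ⟨hWX i hi (hAW i hi hx), hxj⟩)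
  obtain rfl | ⟨i, hi⟩ := s.eq_empty_or_nonempty
  · exact Nat.zero_le _
  have hmX : m ≤ #X := hW i hi ▸ card_le_card (hWX i hi)
  have hpos : 0 < (#X + a - m).choose a := Nat.choose_pos (by lia)
  rw [← div_eq_mul_inv, div_le_one (Nat.cast_pos.mpr hpos)] at hbollobas
  exact Nat.cast_le.mp hbollobas

end TwoFamilies

section CommonCliques

open Finset

variable {V : Type*} {G : SimpleGraph V} {s : ℕ}

/-- `T` is an `s`-clique in the common neighbourhood of the two ends of `e`. The pair is a `Sym2` so
that one clique can be chosen for each non-edge, independently of its orientation. -/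
structure IsCommonClique (G : SimpleGraph V) (s : ℕ) (e : Sym2 V) (T : Finset V) : Prop where
  isNClique : G.IsNClique s T
  adj : ∀ u ∈ e, ∀ t ∈ T, G.Adj u t

lemma IsCommonClique.eq_of_forall_mem_or_mem {e f : Sym2 V} {T : Finset V}
    (hf : IsCommonClique G s f T) (he : e ∈ Gᶜ.edgeSet) (hef : ∀ x ∈ e, x ∈ f ∨ x ∈ T) :
    e = f := by
  induction e using Sym2.ind with
  | h u v =>
    obtain ⟨huv, hnadj⟩ : u ≠ v ∧ ¬ G.Adj u v := by simpa using he
    rcases hef u (Sym2.mem_mk_left u v) with hu | hu <;>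
      rcases hef v (Sym2.mem_mk_right u v) with hv | hv
    · exact ((Sym2.mem_and_mem_iff huv).mp ⟨hu, hv⟩).symm
    · exact absurd (hf.adj u hu v hv) hnadj
    · exact absurd (hf.adj v hv u hu).symm hnadj
    · exact absurd (hf.isNClique.isClique hu hv huv) hnadj

lemma card_le_choose_degree_of_mem_commonClique {v : V} [Fintype (G.neighborSet v)]
    {E : Finset (Sym2 V)} {T : Sym2 V → Finset V} (hE : ∀ e ∈ E, e ∈ Gᶜ.edgeSet)
    (hT : ∀ e ∈ E, IsCommonClique G s e (T e)) (hv : ∀ e ∈ E, v ∈ T e) :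
    #E ≤ (G.degree v + 1 - s).choose 2 := by
  classical
  have hpair : ∀ e ∈ E, #e.toFinset = 2 := fun e he ↦
    Sym2.card_toFinset_of_not_isDiag e (Gᶜ.not_isDiag_of_mem_edgeSet (hE e he))
  have hcard : ∀ e ∈ E, #(e.toFinset ∪ (T e).erase v) = s + 1 := by
    intro e he
    have hdisj : Disjoint e.toFinset ((T e).erase v) := disjoint_left.mpr fun x hx hxT ↦
      ((hT e he).adj x (Sym2.mem_toFinset.mp hx) x (mem_of_mem_erase hxT)).ne rfl
    have hs : 0 < #(T e) := card_pos.mpr ⟨v, hv e he⟩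
    rw [card_union_of_disjoint hdisj, hpair e he, card_erase_of_mem (hv e he)]
    rw [(hT e he).isNClique.card_eq] at hs ⊢
    lia
  have hnbhd : ∀ e ∈ E, e.toFinset ∪ (T e).erase v ⊆ G.neighborFinset v := by
    refine fun e he ↦ union_subset (fun x hx ↦ ?_) fun x hx ↦ ?_ <;>
      rw [G.mem_neighborFinset]
    · exact ((hT e he).adj x (Sym2.mem_toFinset.mp hx) v (hv e he)).symm
    · exact (hT e he).isNClique.isClique (hv e he) (mem_of_mem_erase hx) (ne_of_mem_erase hx).symm
  have huniq : ∀ e ∈ E, ∀ f ∈ E, e.toFinset ⊆ f.toFinset ∪ (T f).erase v → e = f := by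
    refine fun e he f hf hef ↦ (hT f hf).eq_of_forall_mem_or_mem (hE e he) fun x hx ↦ ?_
    exact (mem_union.mp (hef (Sym2.mem_toFinset.mpr hx))).imp Sym2.mem_toFinset.mp mem_of_mem_erase
  have hbound := card_le_choose_of_forall_subset_imp_eq hpair hcard
    (fun _ _ ↦ subset_union_left) hnbhd huniq
  rwa [G.card_neighborFinset_eq_degree, Nat.add_sub_add_right (G.degree v + 1) 1 s] at hbound

lemma two_mul_choose_two (n : ℕ) : 2 * (n.choose 2 : ℤ) = n * ((n : ℤ) - 1) := by
  qify
  rw [Nat.cast_choose_two]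
  ring

lemma two_mul_choose_two_sub_le (d s : ℕ) :
    2 * ((d + 1 - s).choose 2 : ℤ) ≤ ((d : ℤ) - s) * ((d : ℤ) - s + 1) := by
  rcases le_total s (d + 1) with hs | hs
  · rw [two_mul_choose_two, Nat.cast_sub hs]
    push_cast
    exact le_of_eq (by ring)
  · rw [Nat.sub_eq_zero_of_le hs, two_mul_choose_two, Nat.cast_zero, zero_mul]
    exact mul_nonneg_of_nonpos_of_nonpos (by lia) (by lia)

lemma card_edgeFinset_add_card_edgeFinset_compl [Fintype V] [DecidableEq V]
    [DecidableRel G.Adj] : #G.edgeFinset + #Gᶜ.edgeFinset = (Fintype.card V).choose 2 := by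
  rw [← card_union_of_disjoint (disjoint_edgeFinset.mpr disjoint_compl_right), ← edgeFinset_sup,
    ← card_edgeFinset_top_eq_card_choose_two]
  congr!
  exact sup_compl_eq_top

lemma card_edgeFinset_compl_mul_le [Fintype V] [DecidableEq V] [DecidableRel G.Adj]
    (hclique : ∀ e ∈ Gᶜ.edgeSet, ∃ T, IsCommonClique G s e T) :
    #Gᶜ.edgeFinset * s ≤ ∑ v, (G.degree v + 1 - s).choose 2 := by
  choose! T hT using hclique
  calc #Gᶜ.edgeFinset * s
      = ∑ e ∈ Gᶜ.edgeFinset, #{v | v ∈ T e} := by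
        refine (sum_const_nat fun e he ↦ ?_).symm
        rw [filter_univ_mem, (hT e (mem_edgeFinset.mp he)).isNClique.card_eq]
    _ = ∑ v, #{e ∈ Gᶜ.edgeFinset | v ∈ T e} :=
        (sum_card_bipartiteAbove_eq_sum_card_bipartiteBelow fun v e ↦ v ∈ T e).symm
    _ ≤ ∑ v, (G.degree v + 1 - s).choose 2 := by
        refine sum_le_sum fun v _ ↦ card_le_choose_degree_of_mem_commonClique (T := T) ?_ ?_ ?_ <;>
          simp only [mem_filter, mem_edgeFinset, and_imp]
        · exact fun e he _ ↦ he
        · exact fun e he _ ↦ hT e he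
        · exact fun e _ hv ↦ hv

theorem stmt_11_general [Fintype V] [DecidableRel G.Adj]
    (hclique : ∀ e ∈ Gᶜ.edgeSet, ∃ T, IsCommonClique G s e T) :
    (s : ℤ) * Fintype.card V * ((Fintype.card V : ℤ) - s) + 2 * ((s : ℤ) - 1) * #G.edgeFinset ≤
      ∑ v, (G.degree v : ℤ) ^ 2 := by
  classical
  have hdegree : ∑ v, (G.degree v : ℤ) = 2 * #G.edgeFinset := by
    exact_mod_cast G.sum_degrees_eq_twice_card_edges
  have hcompl : 2 * (#Gᶜ.edgeFinset : ℤ) =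
      Fintype.card V * ((Fintype.card V : ℤ) - 1) - 2 * #G.edgeFinset := by
    rw [← two_mul_choose_two, ← card_edgeFinset_add_card_edgeFinset_compl (G := G)]
    push_cast
    ring
  have hsum : 2 * (#Gᶜ.edgeFinset * s : ℤ) ≤ ∑ v, (G.degree v : ℤ) ^ 2
      - (2 * s - 1) * (2 * #G.edgeFinset) + Fintype.card V * (s * (s - 1)) :=
    calc 2 * (#Gᶜ.edgeFinset * s : ℤ)
        ≤ ∑ v, 2 * ((G.degree v + 1 - s).choose 2 : ℤ) := by
          rw [← mul_sum]
          exact_mod_cast Nat.mul_le_mul_left 2 (card_edgeFinset_compl_mul_le hclique)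
      _ ≤ ∑ v, ((G.degree v : ℤ) - s) * ((G.degree v : ℤ) - s + 1) :=
          sum_le_sum fun v _ ↦ two_mul_choose_two_sub_le (G.degree v) s
      _ = ∑ v, ((G.degree v : ℤ) ^ 2 - (2 * s - 1) * G.degree v + s * (s - 1)) :=
          sum_congr rfl fun v _ ↦ by ring
      _ = _ := by
          rw [sum_add_distrib, sum_sub_distrib, ← mul_sum, hdegree, sum_const, card_univ,
            nsmul_eq_mul]
  linear_combination hsum - s * hcompl

lemma IsKSaturated.exists_isCommonClique (hsat : IsKSaturated (s + 2) G) {e : Sym2 V}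
    (he : e ∈ Gᶜ.edgeSet) : ∃ T, IsCommonClique G s e T := by
  classical
  induction e using Sym2.ind with
  | h u v =>
    obtain ⟨huv, hnadj⟩ : u ≠ v ∧ ¬ G.Adj u v := by simpa using he
    obtain ⟨K, hK⟩ : ∃ K, (G ⊔ edge u v).IsNClique (s + 2) K :=
      not_forall_not.mp (hsat.2 u v huv hnadj)
    have hK' : (G ⊔ edge v u).IsNClique (s + 2) K := edge_comm u v ▸ hK
    have huK : u ∈ K := hsat.1.mem_of_sup_edge_isNClique hK
    have hvK : v ∈ K := hsat.1.mem_of_sup_edge_isNClique hK'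
    have hKu : G.IsNClique (s + 1) (K.erase u) := hK.erase_of_sup_edge_of_mem huK
    have hKv : G.IsNClique (s + 1) (K.erase v) := hK'.erase_of_sup_edge_of_mem hvK
    refine ⟨(K.erase u).erase v, hKu.erase_of_mem (mem_erase.mpr ⟨huv.symm, hvK⟩), ?_⟩
    simp only [Sym2.mem_iff, forall_eq_or_imp, forall_eq, mem_erase]
    exact ⟨fun t ⟨htv, htu, htK⟩ ↦ hKv.isClique (by simp [huv, huK]) (by simp [htv, htK]) htu.symm,
      fun t ⟨htv, htu, htK⟩ ↦ hKu.isClique (by simp [huv.symm, hvK]) (by simp [htu, htK]) htv.symm⟩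

end CommonCliques

theorem stmt_11 {V : Type*} [Fintype V] [DecidableEq V] (r n : ℕ) (hr : 2 ≤ r)
    (hn : r + 1 ≤ n) (hcard : Fintype.card V = n)
    (G : SimpleGraph V) [DecidableRel G.Adj] (hsat : IsKSaturated (r + 1) G) :
    ∑ v : V, (G.degree v : ℤ) ^ 2
      ≥ ((r : ℤ) - 1) * (n : ℤ) * ((n : ℤ) - (r : ℤ)) + ((r : ℤ) - 1) * (n : ℤ)
        + 2 * ((r : ℤ) - 2) * (G.edgeFinset.card : ℤ) := by
  obtain ⟨s, rfl⟩ : ∃ s, r = s + 1 := ⟨r - 1, by lia⟩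
  have hgeneral := stmt_11_general fun _ he ↦ hsat.exists_isCommonClique he
  rw [hcard] at hgeneral
  push_cast
  linarith
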